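/- arXiv:1610.01544 — 5 statements merged into one kernel-verified Lean document; each statement's English description precedes it below -/
import Mathlib

section
/- Let W be an m×n real matrix with all entries positive and let W' be an n×m real matrix with all entries positive (m, n ≥ 1). Then there exist vectors a ∈ ℝ^n and b ∈ ℝ^m, all of whose entries are positive, and real numbers λ > 0 and μ > 0, such that b = λ·(W·a), a = μ·(W'·b), and the Euclidean norms of a and b both equal 1. -/
open Matrix in
lemma perron_bound {n : ℕ} (A : Matrix (Fin n) (Fin n) ℝ) (hA : ∀ i j, 0 < A i j)
    (x : Fin n → ℝ) (hx : x ∈ stdSimplex ℝ (Fin n)) (r : ℝ)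
    (h : ∀ i, r * x i ≤ (A *ᵥ x) i) : r ≤ ∑ i, ∑ j, A i j := by
  have h1 : ∑ i, r * x i ≤ ∑ i, ∑ j, A i j * x j := Finset.sum_le_sum fun i _ => h i
  rw [← Finset.mul_sum, hx.2, mul_one] at h1
  refine h1.trans (Finset.sum_le_sum fun i _ => Finset.sum_le_sum fun j _ => ?_)
  have hj : x j ≤ 1 := by
    rw [← hx.2]
    exact Finset.single_le_sum (fun k _ => hx.1 k) (Finset.mem_univ j)
  exact mul_le_of_le_one_right (hA i j).le hj

open Matrix in
lemma mulVec_pos_aux {m n : ℕ} (A : Matrix (Fin m) (Fin n) ℝ) (hA : ∀ i j, 0 < A i j)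
    (x : Fin n → ℝ) (hx : ∀ i, 0 ≤ x i) (hx0 : x ≠ 0) (i : Fin m) : 0 < (A *ᵥ x) i := by
  obtain ⟨j, hj⟩ := Function.ne_iff.mp hx0
  exact Finset.sum_pos' (fun k _ => mul_nonneg (hA i k).le (hx k))
    ⟨j, Finset.mem_univ j, mul_pos (hA i j) (lt_of_le_of_ne (hx j) (Ne.symm hj))⟩

open Matrix in
lemma perron_exists {n : ℕ} (hn : 1 ≤ n) (A : Matrix (Fin n) (Fin n) ℝ)
    (hA : ∀ i j, 0 < A i j) :
    ∃ (x : Fin n → ℝ) (r : ℝ), (∀ i, 0 < x i) ∧ 0 < r ∧ A *ᵥ x = r • x := by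
  haveI : Nonempty (Fin n) := ⟨⟨0, hn⟩⟩
  set R := ∑ i, ∑ j, A i j with hR
  have hR0 : 0 ≤ R := Finset.sum_nonneg fun i _ => Finset.sum_nonneg fun j _ => (hA i j).le
  let K : Set ((Fin n → ℝ) × ℝ) :=
    (stdSimplex ℝ (Fin n) ×ˢ Set.Icc 0 R) ∩ {p | ∀ i, p.2 * p.1 i ≤ (A *ᵥ p.1) i}
  have hK : IsCompact K := by
    refine ((isCompact_stdSimplex ℝ (Fin n)).prod isCompact_Icc).inter_right ?_
    simp only [Set.setOf_forall]
    refine isClosed_iInter fun i => isClosed_le (by fun_prop) ?_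
    simp only [Matrix.mulVec, dotProduct]
    fun_prop
  have hne : K.Nonempty := by
    refine ⟨(Pi.single ⟨0, hn⟩ 1, 0), ⟨single_mem_stdSimplex ℝ _, le_rfl, hR0⟩, fun i => ?_⟩
    simp [(hA _ _).le]
  obtain ⟨⟨x, r⟩, ⟨⟨hx, hr⟩, hxr⟩, hmax⟩ := hK.exists_isMaxOn hne continuous_snd.continuousOn
  simp only [Set.mem_setOf_eq] at hx hr hxr
  have hx0 : x ≠ 0 := by
    rintro rfl
    simpa using hx.2
  have hy := mulVec_pos_aux A hA x hx.1 hx0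
  have key : A *ᵥ x = r • x := by
    by_contra hne
    have hz := mulVec_pos_aux A hA (A *ᵥ x - r • x) (fun i => by simpa using hxr i)
      (sub_ne_zero.mpr hne)
    rw [Matrix.mulVec_sub, Matrix.mulVec_smul] at hz
    set y := A *ᵥ x with hydef
    obtain ⟨i0, hi0⟩ := Finite.exists_min fun i => ((A *ᵥ y) i - r * y i) / y i
    set e := ((A *ᵥ y) i0 - r * y i0) / y i0 with he
    have he0 : 0 < e := div_pos (by simpa using hz i0) (hy i0)
    have hs : 0 < ∑ i, y i := Finset.sum_pos (fun i _ => hy i) Finset.univ_nonempty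
    set s := ∑ i, y i with hsdef
    have hmem : s⁻¹ • y ∈ stdSimplex ℝ (Fin n) := by
      refine ⟨fun i => mul_nonneg (inv_pos.mpr hs).le (hy i).le, ?_⟩
      simp only [Pi.smul_apply, smul_eq_mul, ← Finset.mul_sum]
      exact inv_mul_cancel₀ hs.ne'
    have hle : ∀ i, (r + e) * (s⁻¹ • y) i ≤ (A *ᵥ (s⁻¹ • y)) i := by
      intro i
      have h1 := (le_div_iff₀ (hy i)).mp (hi0 i)
      rw [Matrix.mulVec_smul]
      simp only [Pi.smul_apply, smul_eq_mul]
      have h2 : (r + e) * y i ≤ (A *ᵥ y) i := by linarith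
      have h3 := mul_le_mul_of_nonneg_left h2 (inv_pos.mpr hs).le
      linarith
    have hin : (s⁻¹ • y, r + e) ∈ K :=
      ⟨⟨hmem, by have := hr.1; simp only; linarith, perron_bound A hA _ hmem _ hle⟩, hle⟩
    have := hmax hin
    simp only [Set.mem_setOf_eq] at this
    linarith
  have hpos : ∀ i, 0 < r * x i := fun i => by
    have := hy i
    rwa [key] at this
  have hr0 : 0 < r := lt_of_le_of_ne hr.1 (by
    rintro rfl
    simpa using hpos ⟨0, hn⟩)
  exact ⟨x, r, fun i => pos_of_mul_pos_right (hpos i) hr0.le, hr0, key⟩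


/-- NEBS existence, Theorem 3.1 of the paper, existence half.
Let `W` be an `m × n` positive real matrix and `W'` an `n × m` positive real matrix
(`m, n ≥ 1`). Then there exist vectors `a ∈ ℝ^n`, `b ∈ ℝ^m` with all entries positive
and Euclidean norm `1`, and reals `λ, μ > 0`, with `b = λ • (W · a)` and
`a = μ • (W' · b)`. -/
theorem nebs_exists (m n : ℕ) (hm : 1 ≤ m) (hn : 1 ≤ n)
    (W : Matrix (Fin m) (Fin n) ℝ) (W' : Matrix (Fin n) (Fin m) ℝ)
    (hW : ∀ i j, 0 < W i j) (hW' : ∀ i j, 0 < W' i j) :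
    ∃ (a : Fin n → ℝ) (b : Fin m → ℝ) (l mu : ℝ),
      (∀ i, 0 < a i) ∧ (∀ i, 0 < b i) ∧
      0 < l ∧ 0 < mu ∧
      b = l • W.mulVec a ∧ a = mu • W'.mulVec b ∧
      ‖(WithLp.equiv 2 (Fin n → ℝ)).symm a‖ = 1 ∧
      ‖(WithLp.equiv 2 (Fin m → ℝ)).symm b‖ = 1 := by
  haveI : Nonempty (Fin n) := ⟨⟨0, hn⟩⟩
  haveI : Nonempty (Fin m) := ⟨⟨0, hm⟩⟩
  obtain ⟨x, r, hx, hr, hxr⟩ := perron_exists hn (W' * W) (fun i j => by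
    rw [Matrix.mul_apply]
    exact Finset.sum_pos (fun k _ => mul_pos (hW' i k) (hW k j)) Finset.univ_nonempty)
  rw [← Matrix.mulVec_mulVec] at hxr
  have hx0 : x ≠ 0 := fun h => by simpa [h] using hx ⟨0, hn⟩
  have hy := mulVec_pos_aux W hW x (fun i => (hx i).le) hx0
  set y := W.mulVec x with hydef
  have hy0 : y ≠ 0 := fun h => by simpa [h] using hy ⟨0, hm⟩
  have hnx : 0 < ‖WithLp.toLp 2 x‖ := norm_pos_iff.mpr (by simpa using hx0)
  have hny : 0 < ‖WithLp.toLp 2 y‖ := norm_pos_iff.mpr (by simpa using hy0)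
  set p := ‖WithLp.toLp 2 x‖ with hp
  set q := ‖WithLp.toLp 2 y‖ with hq
  refine ⟨p⁻¹ • x, q⁻¹ • y, p / q, q / (p * r), fun i => mul_pos (inv_pos.mpr hnx) (hx i),
    fun i => mul_pos (inv_pos.mpr hny) (hy i), by positivity, by positivity, ?_, ?_, ?_, ?_⟩
  · rw [Matrix.mulVec_smul, ← hydef, smul_smul]
    congr 1
    field_simp
  · rw [Matrix.mulVec_smul, hxr, smul_smul, smul_smul]
    congr 1
    field_simp
  · change ‖WithLp.toLp 2 (p⁻¹ • x)‖ = 1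
    rw [WithLp.toLp_smul, norm_smul, ← hp, Real.norm_of_nonneg (by positivity)]
    exact inv_mul_cancel₀ hnx.ne'
  · change ‖WithLp.toLp 2 (q⁻¹ • y)‖ = 1
    rw [WithLp.toLp_smul, norm_smul, ← hq, Real.norm_of_nonneg (by positivity)]
    exact inv_mul_cancel₀ hny.ne'
end

section
/- Let W be an m×n real matrix with all entries positive and let W' be an n×m real matrix with all entries positive. Suppose (a₁, b₁) with λ₁, μ₁ > 0 and (a₂, b₂) with λ₂, μ₂ > 0 both satisfy: all entries of aᵢ ∈ ℝ^n and bᵢ ∈ ℝ^m are positive, ‖aᵢ‖ = ‖bᵢ‖ = 1 in the Euclidean norm, bᵢ = λᵢ·(W·aᵢ) and aᵢ = μᵢ·(W'·bᵢ). Then a₁ = a₂ and b₁ = b₂. -/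
theorem nebs_aux_norm {k : ℕ} (x y : Fin k → ℝ) (t : ℝ) (ht : 0 < t) (h : x = t • y)
    (hx : ‖(WithLp.equiv 2 (Fin k → ℝ)).symm x‖ = 1)
    (hy : ‖(WithLp.equiv 2 (Fin k → ℝ)).symm y‖ = 1) : x = y := by
  have e : (WithLp.equiv 2 (Fin k → ℝ)).symm x = t • (WithLp.equiv 2 (Fin k → ℝ)).symm y := by
    rw [h]; rfl
  rw [e, norm_smul, hy, Real.norm_of_nonneg ht.le, mul_one] at hx
  rw [h, hx, one_smul]

theorem nebs_aux_prop {n : ℕ} [Nonempty (Fin n)] (M : Matrix (Fin n) (Fin n) ℝ)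
    (hM : ∀ i j, 0 < M i j) (a a' : Fin n → ℝ) (c c' : ℝ)
    (ha : ∀ i, 0 < a i) (ha' : ∀ i, 0 < a' i) (hc' : 0 < c') (hcc : c' ≤ c)
    (e : a = c • M.mulVec a) (e' : a' = c' • M.mulVec a') :
    ∃ t : ℝ, 0 < t ∧ a = t • a' := by
  obtain ⟨k, hk⟩ := Finite.exists_min (fun i => a i / a' i)
  set t := a k / a' k with ht
  have htp : 0 < t := div_pos (ha k) (ha' k)
  have htk : a k = t * a' k := by rw [ht, div_mul_cancel₀ _ (ha' k).ne']
  have hc : 0 < c := hc'.trans_le hcc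
  refine ⟨t, htp, ?_⟩
  have hv : ∀ i, 0 ≤ a i - t * a' i := fun i => by
    have := (le_div_iff₀ (ha' i)).1 (hk i)
    linarith
  have e1 : a k = c * ∑ j, M k j * a j := congrFun e k
  have e2 : a' k = c' * ∑ j, M k j * a' j := congrFun e' k
  have hpos : 0 < ∑ j, M k j * a' j :=
    Finset.sum_pos (fun j _ => mul_pos (hM k j) (ha' j)) Finset.univ_nonempty
  have hs : ∑ j, M k j * (a j - t * a' j) = ∑ j, M k j * a j - t * ∑ j, M k j * a' j := by
    rw [Finset.mul_sum, ← Finset.sum_sub_distrib]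
    exact Finset.sum_congr rfl fun j _ => by ring
  have hnn : ∀ j ∈ Finset.univ, 0 ≤ M k j * (a j - t * a' j) :=
    fun j _ => mul_nonneg (hM k j).le (hv j)
  have hle : ∑ j, M k j * (a j - t * a' j) ≤ 0 := by
    rw [hs]
    have h1 : c * (∑ j, M k j * a j - t * ∑ j, M k j * a' j)
        = (c' - c) * (t * ∑ j, M k j * a' j) := by
      rw [mul_sub, ← e1, htk, e2]; ring
    have h2 : (c' - c) * (t * ∑ j, M k j * a' j) ≤ 0 :=
      mul_nonpos_of_nonpos_of_nonneg (by linarith) (mul_pos htp hpos).le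
    by_contra hcon
    have := mul_pos hc (not_le.1 hcon)
    linarith
  have hz := (Finset.sum_eq_zero_iff_of_nonneg hnn).1 (le_antisymm hle (Finset.sum_nonneg hnn))
  funext j
  have := (mul_eq_zero.1 (hz j (Finset.mem_univ j))).resolve_left (hM k j).ne'
  simp only [Pi.smul_apply, smul_eq_mul]
  linarith

/-- NEBS uniqueness, Theorem 3.1 of the paper, uniqueness half.
If `W` and `W'` are positive matrices and `(a₁, b₁)` (with `λ₁, μ₁ > 0`) and
`(a₂, b₂)` (with `λ₂, μ₂ > 0`) are both normed eigenvector bicentrality sequences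
for `(W, W')`, then `a₁ = a₂` and `b₁ = b₂`. -/
theorem nebs_unique (m n : ℕ)
    (W : Matrix (Fin m) (Fin n) ℝ) (W' : Matrix (Fin n) (Fin m) ℝ)
    (hW : ∀ i j, 0 < W i j) (hW' : ∀ i j, 0 < W' i j)
    (a₁ a₂ : Fin n → ℝ) (b₁ b₂ : Fin m → ℝ) (l₁ l₂ mu₁ mu₂ : ℝ)
    (ha₁ : ∀ i, 0 < a₁ i) (hb₁ : ∀ i, 0 < b₁ i)
    (ha₂ : ∀ i, 0 < a₂ i) (hb₂ : ∀ i, 0 < b₂ i)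
    (hna₁ : ‖(WithLp.equiv 2 (Fin n → ℝ)).symm a₁‖ = 1)
    (hnb₁ : ‖(WithLp.equiv 2 (Fin m → ℝ)).symm b₁‖ = 1)
    (hna₂ : ‖(WithLp.equiv 2 (Fin n → ℝ)).symm a₂‖ = 1)
    (hnb₂ : ‖(WithLp.equiv 2 (Fin m → ℝ)).symm b₂‖ = 1)
    (hl₁ : 0 < l₁) (hmu₁ : 0 < mu₁) (hl₂ : 0 < l₂) (hmu₂ : 0 < mu₂)
    (heq₁b : b₁ = l₁ • W.mulVec a₁) (heq₁a : a₁ = mu₁ • W'.mulVec b₁)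
    (heq₂b : b₂ = l₂ • W.mulVec a₂) (heq₂a : a₂ = mu₂ • W'.mulVec b₂) :
    a₁ = a₂ ∧ b₁ = b₂ := by
  have hm : Nonempty (Fin m) := by
    by_contra hcon
    rw [not_nonempty_iff] at hcon
    rw [Subsingleton.elim ((WithLp.equiv 2 (Fin m → ℝ)).symm b₁) 0, norm_zero] at hnb₁
    exact zero_ne_one hnb₁
  have hn : Nonempty (Fin n) := by
    by_contra hcon
    rw [not_nonempty_iff] at hcon
    rw [Subsingleton.elim ((WithLp.equiv 2 (Fin n → ℝ)).symm a₁) 0, norm_zero] at hna₁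
    exact zero_ne_one hna₁
  have hM : ∀ i j, 0 < (W' * W) i j := fun i j => by
    rw [Matrix.mul_apply]
    exact Finset.sum_pos (fun k _ => mul_pos (hW' i k) (hW k j)) Finset.univ_nonempty
  have e₁ : a₁ = (mu₁ * l₁) • (W' * W).mulVec a₁ := by
    rw [← Matrix.mulVec_mulVec, mul_smul, ← Matrix.mulVec_smul, ← heq₁b, ← heq₁a]
  have e₂ : a₂ = (mu₂ * l₂) • (W' * W).mulVec a₂ := by
    rw [← Matrix.mulVec_mulVec, mul_smul, ← Matrix.mulVec_smul, ← heq₂b, ← heq₂a]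
  have haa : a₁ = a₂ := by
    rcases le_total (mu₂ * l₂) (mu₁ * l₁) with h | h
    · obtain ⟨t, ht, he⟩ := nebs_aux_prop (W' * W) hM a₁ a₂ _ _ ha₁ ha₂
        (mul_pos hmu₂ hl₂) h e₁ e₂
      exact nebs_aux_norm _ _ t ht he hna₁ hna₂
    · obtain ⟨t, ht, he⟩ := nebs_aux_prop (W' * W) hM a₂ a₁ _ _ ha₂ ha₁
        (mul_pos hmu₁ hl₁) h e₂ e₁
      exact (nebs_aux_norm _ _ t ht he hna₂ hna₁).symm
  refine ⟨haa, nebs_aux_norm _ _ (l₁ / l₂) (div_pos hl₁ hl₂) ?_ hnb₁ hnb₂⟩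
  rw [heq₁b, heq₂b, smul_smul, div_mul_cancel₀ _ hl₂.ne', haa]
end

section
/- Let W be an m×n real matrix with nonnegative entries and W' an n×m real matrix with nonnegative entries (m, n ≥ 2), and suppose both square matrices W·W' (of size m×m) and W'·W (of size n×n) are nonnegative and irreducible. Then there exists exactly one pair of vectors (a, b), a ∈ ℝ^n and b ∈ ℝ^m with all entries positive and Euclidean norms ‖a‖ = ‖b‖ = 1, such that b = λ·(W·a) and a = μ·(W'·b) for some λ > 0 and μ > 0. -/
open Matrix in
lemma pf_pos {k : ℕ} (M : Matrix (Fin k) (Fin k) ℝ) (hM : ∀ i j, 0 ≤ M i j)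
    (hirr : ∀ i j : Fin k, Relation.ReflTransGen (fun u v : Fin k => M v u ≠ 0) i j)
    (t : ℝ) (x : Fin k → ℝ) (hx : ∀ i, 0 ≤ x i) (i : Fin k) (hi : x i ≠ 0)
    (h : M *ᵥ x = t • x) : ∀ j, 0 < x j := by
  intro j
  induction hirr i j with
  | refl => exact lt_of_le_of_ne (hx i) (Ne.symm hi)
  | @tail u v _ huv ih =>
    have h1 : M v u * x u ≤ (M *ᵥ x) v := by
      simp only [mulVec, dotProduct]
      exact Finset.single_le_sum (f := fun w => M v w * x w)
        (fun w _ => mul_nonneg (hM v w) (hx w)) (Finset.mem_univ u)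
    have h2 : 0 < M v u * x u := mul_pos (lt_of_le_of_ne (hM v u) (Ne.symm huv)) ih
    rw [h] at h1
    refine lt_of_le_of_ne (hx v) ?_
    intro h0
    simp only [Pi.smul_apply, smul_eq_mul, ← h0, mul_zero] at h1
    linarith

open Matrix in
lemma pf_pow_pos {k : ℕ} (M : Matrix (Fin k) (Fin k) ℝ) (hM : ∀ i j, 0 ≤ M i j)
    (hirr : ∀ i j : Fin k, Relation.ReflTransGen (fun u v : Fin k => M v u ≠ 0) i j) :
    ∃ P : Matrix (Fin k) (Fin k) ℝ, Commute M P ∧ ∀ i j, 0 < P i j := by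
  have hpow : ∀ (e : ℕ) i j, 0 ≤ (M ^ e) i j := by
    intro e
    induction e with
    | zero =>
      intro i j
      rw [pow_zero, Matrix.one_apply]
      split_ifs <;> norm_num
    | succ e ih =>
      intro i j
      rw [pow_succ, Matrix.mul_apply]
      exact Finset.sum_nonneg fun w _ => mul_nonneg (ih _ _) (hM _ _)
  have hex : ∀ i j, ∃ e : ℕ, 0 < (M ^ e) j i := by
    intro i j
    induction hirr i j with
    | refl => exact ⟨0, by simp⟩
    | @tail u v _ huv ih =>
      obtain ⟨e, he⟩ := ih
      refine ⟨e + 1, ?_⟩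
      rw [pow_succ', Matrix.mul_apply]
      refine Finset.sum_pos' (fun w _ => mul_nonneg (hM _ _) (hpow _ _ _)) ⟨u, Finset.mem_univ _, ?_⟩
      exact mul_pos (lt_of_le_of_ne (hM v u) (Ne.symm huv)) he
  choose e he using hex
  refine ⟨∑ i, ∑ j, M ^ e i j, ?_, ?_⟩
  · refine Commute.sum_right _ _ _ fun i _ => Commute.sum_right _ _ _ fun j _ => ?_
    exact Commute.pow_right (Commute.refl M) _
  · intro i j
    simp only [Matrix.sum_apply]
    refine Finset.sum_pos' (fun w _ => Finset.sum_nonneg fun w' _ => hpow _ _ _)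
      ⟨j, Finset.mem_univ _, ?_⟩
    exact Finset.sum_pos' (fun w' _ => hpow _ _ _) ⟨i, Finset.mem_univ _, he j i⟩

open Matrix in
lemma pf_exists {k : ℕ} (hk : 2 ≤ k) (M : Matrix (Fin k) (Fin k) ℝ) (hM : ∀ i j, 0 ≤ M i j)
    (hirr : ∀ i j : Fin k, Relation.ReflTransGen (fun u v : Fin k => M v u ≠ 0) i j) :
    ∃ (t : ℝ) (x : Fin k → ℝ), 0 < t ∧ (∀ i, 0 < x i) ∧ M *ᵥ x = t • x := by
  obtain ⟨P, hPc, hP⟩ := pf_pow_pos M hM hirr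
  let B : ℝ := ∑ i, ∑ j, M i j
  let S : Set (ℝ × (Fin k → ℝ)) :=
    (Set.Icc 0 B ×ˢ stdSimplex ℝ (Fin k)) ∩ {p | ∀ i, p.1 * p.2 i ≤ (M *ᵥ p.2) i}
  have hB : ∀ (t : ℝ) (x : Fin k → ℝ), x ∈ stdSimplex ℝ (Fin k) →
      (∀ i, t * x i ≤ (M *ᵥ x) i) → t ≤ B := by
    intro t x hx h
    have h1 : ∑ i, t * x i ≤ ∑ i, (M *ᵥ x) i := Finset.sum_le_sum fun i _ => h i
    rw [← Finset.mul_sum, hx.2, mul_one] at h1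
    refine h1.trans ?_
    refine Finset.sum_le_sum fun i _ => ?_
    simp only [mulVec, dotProduct]
    refine Finset.sum_le_sum fun j _ => ?_
    have : x j ≤ 1 := by
      rw [← hx.2]
      exact Finset.single_le_sum (f := x) (fun w _ => hx.1 w) (Finset.mem_univ j)
    exact mul_le_of_le_one_right (hM i j) this
  have hScomp : IsCompact S := by
    refine (isCompact_Icc.prod (isCompact_stdSimplex ℝ (Fin k))).inter_right ?_
    rw [Set.ofPred_forall]
    refine isClosed_iInter fun i => ?_
    refine isClosed_le (by fun_prop) ?_
    simp only [mulVec, dotProduct]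
    fun_prop
  have hSne : S.Nonempty := by
    let i0 : Fin k := ⟨0, by omega⟩
    refine ⟨(0, Pi.single i0 1), ⟨⟨⟨le_refl _, ?_⟩, single_mem_stdSimplex ℝ i0⟩, ?_⟩⟩
    · exact Finset.sum_nonneg fun i _ => Finset.sum_nonneg fun j _ => hM i j
    · intro i
      simp [hM]
  obtain ⟨⟨t, x⟩, hmem, hmax⟩ := hScomp.exists_isMaxOn hSne continuous_fst.continuousOn
  obtain ⟨⟨⟨ht0, htB⟩, hxs⟩, hle⟩ := hmem
  simp only [Set.mem_ofPred_eq] at ht0 htB hxs hle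
  have hxne : ∃ i, x i ≠ 0 := by
    by_contra hcon
    push Not at hcon
    have := hxs.2
    simp [hcon] at this
  have hPpos : ∀ y : Fin k → ℝ, (∀ i, 0 ≤ y i) → (∃ i, y i ≠ 0) → ∀ i, 0 < (P *ᵥ y) i := by
    rintro y hy ⟨j, hj⟩ i
    simp only [mulVec, dotProduct]
    exact Finset.sum_pos' (fun w _ => mul_nonneg (hP _ _).le (hy w))
      ⟨j, Finset.mem_univ _, mul_pos (hP _ _) (lt_of_le_of_ne (hy j) (Ne.symm hj))⟩
  have heq : M *ᵥ x = t • x := by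
    by_contra hne
    have hyne : ∃ i, (M *ᵥ x - t • x) i ≠ 0 := by
      by_contra hcon
      push Not at hcon
      exact hne (sub_eq_zero.mp (funext hcon))
    have hz := hPpos _ (fun i => by simpa using hle i) hyne
    have hw := hPpos x hxs.1 hxne
    set w := P *ᵥ x with hwdef
    have hcomm : P *ᵥ (M *ᵥ x - t • x) = M *ᵥ w - t • w := by
      rw [mulVec_sub, mulVec_smul, mulVec_mulVec, ← hPc.eq, ← mulVec_mulVec]
    rw [hcomm] at hz
    have : Nonempty (Fin k) := ⟨⟨0, by omega⟩⟩
    obtain ⟨i0, hi0⟩ := Finite.exists_min (fun i => (M *ᵥ w) i / w i)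
    set t' := (M *ᵥ w) i0 / w i0 with ht'
    have htt : t < t' := by
      rw [ht', lt_div_iff₀ (hw i0)]
      simpa using hz i0
    have hs : 0 < ∑ i, w i := Finset.sum_pos (fun i _ => hw i) Finset.univ_nonempty
    have hle' : ∀ i, t' * ((∑ i, w i)⁻¹ • w) i ≤ (M *ᵥ ((∑ i, w i)⁻¹ • w)) i := by
      intro i
      have h1 := (le_div_iff₀ (hw i)).mp (hi0 i)
      rw [mulVec_smul]
      simp only [Pi.smul_apply, smul_eq_mul]
      rw [mul_left_comm]
      exact mul_le_mul_of_nonneg_left h1 (inv_pos.mpr hs).le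
    have hsx : ((∑ i, w i)⁻¹ • w) ∈ stdSimplex ℝ (Fin k) := by
      constructor
      · intro i
        exact mul_nonneg (inv_pos.mpr hs).le (hw i).le
      · simp only [Pi.smul_apply, smul_eq_mul]
        rw [← Finset.mul_sum, inv_mul_cancel₀ hs.ne']
    have hmem' : (t', (∑ i, w i)⁻¹ • w) ∈ S :=
      ⟨⟨⟨ht0.trans htt.le, hB _ _ hsx hle'⟩, hsx⟩, hle'⟩
    have h3 : t' ≤ t := hmax hmem'
    linarith
  obtain ⟨i, hi⟩ := hxne
  have hxpos := pf_pos M hM hirr t x hxs.1 i hi heq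
  refine ⟨t, x, ?_, hxpos, heq⟩
  refine lt_of_le_of_ne ht0 ?_
  intro h0
  have hne : (⟨0, by omega⟩ : Fin k) ≠ ⟨1, by omega⟩ := by simp
  rcases Relation.ReflTransGen.cases_tail (hirr ⟨0, by omega⟩ ⟨1, by omega⟩) with h | ⟨u, _, hu⟩
  · exact hne h.symm
  · have h1 : 0 < (M *ᵥ x) ⟨1, by omega⟩ := by
      simp only [mulVec, dotProduct]
      exact Finset.sum_pos' (fun w _ => mul_nonneg (hM _ _) (hxpos w).le)
        ⟨u, Finset.mem_univ _, mul_pos (lt_of_le_of_ne (hM _ u) (Ne.symm hu)) (hxpos u)⟩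
    rw [heq, ← h0] at h1
    simp at h1

open Matrix in
lemma pf_touch {k : ℕ} (hk : 2 ≤ k) (M : Matrix (Fin k) (Fin k) ℝ) (hM : ∀ i j, 0 ≤ M i j)
    (s t : ℝ) (x y : Fin k → ℝ) (hx : ∀ i, 0 < x i) (hy : ∀ i, 0 < y i)
    (hMx : M *ᵥ x = t • x) (hMy : M *ᵥ y = s • y) :
    t ≤ s ∧ ∃ c : ℝ, 0 < c ∧ (∀ i, 0 ≤ (y - c • x) i) ∧ ∃ i, (y - c • x) i = 0 := by
  have : Nonempty (Fin k) := ⟨⟨0, by omega⟩⟩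
  obtain ⟨i0, hi0⟩ := Finite.exists_min (fun i => y i / x i)
  set c := y i0 / x i0 with hc
  have hcpos : 0 < c := div_pos (hy i0) (hx i0)
  have hz : ∀ i, 0 ≤ (y - c • x) i := fun i => by
    have := (le_div_iff₀ (hx i)).mp (hi0 i)
    simpa using this
  have hyc : y i0 = c * x i0 := by rw [hc, div_mul_cancel₀ _ (hx i0).ne']
  refine ⟨?_, c, hcpos, hz, i0, by simp [hyc]⟩
  have h1 : 0 ≤ (M *ᵥ (y - c • x)) i0 := by
    simp only [mulVec, dotProduct]
    exact Finset.sum_nonneg fun w _ => mul_nonneg (hM _ _) (hz w)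
  rw [mulVec_sub, mulVec_smul, hMx, hMy] at h1
  simp only [Pi.sub_apply, Pi.smul_apply, smul_eq_mul, hyc] at h1
  have h2 : 0 < c * x i0 := mul_pos hcpos (hx i0)
  by_contra hcon
  push Not at hcon
  nlinarith [mul_pos h2 (sub_pos.mpr hcon)]

open Matrix in
lemma pf_unique {k : ℕ} (hk : 2 ≤ k) (M : Matrix (Fin k) (Fin k) ℝ) (hM : ∀ i j, 0 ≤ M i j)
    (hirr : ∀ i j : Fin k, Relation.ReflTransGen (fun u v : Fin k => M v u ≠ 0) i j)
    (s t : ℝ) (x y : Fin k → ℝ) (hx : ∀ i, 0 < x i) (hy : ∀ i, 0 < y i)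
    (hMx : M *ᵥ x = t • x) (hMy : M *ᵥ y = s • y) :
    ∃ c : ℝ, 0 < c ∧ y = c • x := by
  obtain ⟨hts, c, hc, hz, i0, hi0⟩ := pf_touch hk M hM s t x y hx hy hMx hMy
  obtain ⟨hst, -⟩ := pf_touch hk M hM t s y x hy hx hMy hMx
  obtain rfl : s = t := le_antisymm hst hts
  refine ⟨c, hc, ?_⟩
  by_contra hne
  have hzne : ∃ i, (y - c • x) i ≠ 0 := by
    by_contra hcon
    push Not at hcon
    exact hne (sub_eq_zero.mp (funext hcon))
  obtain ⟨i, hi⟩ := hzne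
  have := pf_pos M hM hirr s (y - c • x) hz i hi (by
    rw [mulVec_sub, mulVec_smul, hMx, hMy, smul_sub, smul_comm]) i0
  linarith

lemma pf_norm_smul {k : ℕ} (c : ℝ) (hc : 0 < c) (x : Fin k → ℝ) :
    ‖(WithLp.equiv 2 (Fin k → ℝ)).symm (c • x)‖ = c * ‖(WithLp.equiv 2 (Fin k → ℝ)).symm x‖ := by
  have : (WithLp.equiv 2 (Fin k → ℝ)).symm (c • x) = c • (WithLp.equiv 2 (Fin k → ℝ)).symm x := rfl
  rw [this, norm_smul, Real.norm_of_nonneg hc.le]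

lemma pf_norm_pos {k : ℕ} (i : Fin k) (x : Fin k → ℝ) (hx : ∀ i, 0 < x i) :
    0 < ‖(WithLp.equiv 2 (Fin k → ℝ)).symm x‖ := by
  rw [norm_pos_iff]
  intro h
  have h1 : x i = 0 := congrArg (fun v : EuclideanSpace ℝ (Fin k) => v i) h
  exact (hx i).ne' h1

/-- Remark 3.3 of the paper.
Let `W` be an `m × n` nonnegative real matrix and `W'` an `n × m` nonnegative real
matrix (`m, n ≥ 2`), and suppose both `W·W'` and `W'·W` are nonnegative and
irreducible (the directed graph with an edge from `j` to `i` whenever the `(i, j)`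
entry is nonzero is strongly connected). Then there is exactly one pair `(a, b)` of
vectors with all entries positive and Euclidean norms `1` such that
`b = λ • (W · a)` and `a = μ • (W' · b)` for some `λ, μ > 0`. -/
theorem nebs_exists_unique_of_irreducible (m n : ℕ) (hm : 2 ≤ m) (hn : 2 ≤ n)
    (W : Matrix (Fin m) (Fin n) ℝ) (W' : Matrix (Fin n) (Fin m) ℝ)
    (hW : ∀ i j, 0 ≤ W i j) (hW' : ∀ i j, 0 ≤ W' i j)
    (hWW'nonneg : ∀ i j, 0 ≤ (W * W') i j)
    (hW'Wnonneg : ∀ i j, 0 ≤ (W' * W) i j)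
    (hWW'irr : ∀ i j : Fin m,
      Relation.ReflTransGen (fun u v : Fin m => (W * W') v u ≠ 0) i j)
    (hW'Wirr : ∀ i j : Fin n,
      Relation.ReflTransGen (fun u v : Fin n => (W' * W) v u ≠ 0) i j) :
    ∃! p : (Fin n → ℝ) × (Fin m → ℝ),
      (∀ i, 0 < p.1 i) ∧ (∀ i, 0 < p.2 i) ∧
      ‖(WithLp.equiv 2 (Fin n → ℝ)).symm p.1‖ = 1 ∧
      ‖(WithLp.equiv 2 (Fin m → ℝ)).symm p.2‖ = 1 ∧
      ∃ l mu : ℝ, 0 < l ∧ 0 < mu ∧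
        p.2 = l • W.mulVec p.1 ∧ p.1 = mu • W'.mulVec p.2 := by
  have i0 : Fin n := ⟨0, by omega⟩
  have j0 : Fin m := ⟨0, by omega⟩
  obtain ⟨t, x, ht, hx, hMx⟩ := pf_exists hn (W' * W) hW'Wnonneg hW'Wirr
  have hc0 : ∀ i, 0 ≤ W.mulVec x i := fun i => by
    simp only [Matrix.mulVec, dotProduct]
    exact Finset.sum_nonneg fun w _ => mul_nonneg (hW _ _) (hx w).le
  have hW'c : W'.mulVec (W.mulVec x) = t • x := by rw [Matrix.mulVec_mulVec, hMx]
  have hcne : ∃ i, W.mulVec x i ≠ 0 := by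
    by_contra hcon
    push Not at hcon
    have h0 : W.mulVec x = 0 := funext hcon
    rw [h0, Matrix.mulVec_zero] at hW'c
    have := congrFun hW'c i0
    simp [ht.ne', (hx i0).ne'] at this
  obtain ⟨i1, hi1⟩ := hcne
  have hc := pf_pos (W * W') hWW'nonneg hWW'irr t (W.mulVec x) hc0 i1 hi1 (by
    rw [← Matrix.mulVec_mulVec, hW'c, Matrix.mulVec_smul])
  have hxn := pf_norm_pos i0 x hx
  have hcn := pf_norm_pos j0 _ hc
  set α := ‖(WithLp.equiv 2 (Fin n → ℝ)).symm x‖ with hα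
  set β := ‖(WithLp.equiv 2 (Fin m → ℝ)).symm (W.mulVec x)‖ with hβ
  refine ⟨(α⁻¹ • x, β⁻¹ • W.mulVec x), ⟨?_, ?_, ?_, ?_, α * β⁻¹, β * t⁻¹ * α⁻¹, by positivity,
    by positivity, ?_, ?_⟩, ?_⟩
  · exact fun i => mul_pos (inv_pos.mpr hxn) (hx i)
  · exact fun i => mul_pos (inv_pos.mpr hcn) (hc i)
  · rw [pf_norm_smul _ (inv_pos.mpr hxn), ← hα, inv_mul_cancel₀ hxn.ne']
  · rw [pf_norm_smul _ (inv_pos.mpr hcn), ← hβ, inv_mul_cancel₀ hcn.ne']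
  · simp only [Matrix.mulVec_smul, smul_smul]
    congr 1
    field_simp
  · simp only [Matrix.mulVec_smul, smul_smul, hW'c]
    congr 1
    field_simp
  · rintro ⟨a, b⟩ ⟨ha, hb, hna, hnb, l, mu, hl, hmu, hbe, hae⟩
    simp only at ha hb hna hnb hbe hae
    have hMa : (W' * W).mulVec a = (mu * l)⁻¹ • a := by
      have h1 : a = (mu * l) • (W' * W).mulVec a := by
        rw [hbe, Matrix.mulVec_smul, Matrix.mulVec_mulVec, smul_smul] at hae
        exact hae
      conv_rhs => rw [h1]
      rw [smul_smul, inv_mul_cancel₀ (by positivity), one_smul]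
    obtain ⟨c, hcp, hac⟩ := pf_unique hn (W' * W) hW'Wnonneg hW'Wirr _ _ x a hx ha hMx hMa
    have h1 : c = α⁻¹ := by
      rw [hac, pf_norm_smul _ hcp] at hna
      exact eq_inv_of_mul_eq_one_left hna
    have h2 : b = (l * c) • W.mulVec x := by
      rw [hbe, hac, Matrix.mulVec_smul, smul_smul]
    have h3 : l * c = β⁻¹ := by
      rw [h2, pf_norm_smul _ (by positivity)] at hnb
      exact eq_inv_of_mul_eq_one_left hnb
    rw [h2, hac, h3, h1]
end

section
/- Let W be an m×n real matrix with all entries positive and W' an n×m real matrix with all entries positive. Suppose a ∈ ℝ^n and b ∈ ℝ^m have all entries positive and, for some ν > 0, satisfy b = ν·((W·W')·b) and a = ν·((W'·W)·a). Then there exist real numbers α > 0 and β > 0 such that W·a = α·b, W'·b = β·a, and α·β·ν = 1. -/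
/-- key step in the proof of Theorem 3.1 of the paper.
Let `W` and `W'` be positive matrices, and let `a ∈ ℝ^n`, `b ∈ ℝ^m` have all
entries positive and satisfy `b = ν • ((W·W') · b)` and `a = ν • ((W'·W) · a)` for
some `ν > 0`. Then there are `α, β > 0` with `W · a = α • b`, `W' · b = β • a`, and
`α·β·ν = 1`. -/
theorem nebs_linked (m n : ℕ)
    (W : Matrix (Fin m) (Fin n) ℝ) (W' : Matrix (Fin n) (Fin m) ℝ)
    (hW : ∀ i j, 0 < W i j) (hW' : ∀ i j, 0 < W' i j)
    (a : Fin n → ℝ) (b : Fin m → ℝ)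
    (ha : ∀ i, 0 < a i) (hb : ∀ i, 0 < b i)
    (ν : ℝ) (hν : 0 < ν)
    (hbeq : b = ν • (W * W').mulVec b)
    (haeq : a = ν • (W' * W).mulVec a) :
    ∃ α β : ℝ, 0 < α ∧ 0 < β ∧
      W.mulVec a = α • b ∧ W'.mulVec b = β • a ∧ α * β * ν = 1 := by
  have hb2 : ν • W.mulVec (W'.mulVec b) = b := by
    rw [Matrix.mulVec_mulVec]; exact hbeq.symm
  have ha2 : ν • W'.mulVec (W.mulVec a) = a := by
    rw [Matrix.mulVec_mulVec]; exact haeq.symm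
  rcases Nat.eq_zero_or_pos m with hm | hm
  · subst hm
    have hn : IsEmpty (Fin n) := by
      refine ⟨fun j => ?_⟩
      have h1 := congrFun ha2 j
      simp [Matrix.mulVec, dotProduct] at h1
      have := ha j
      linarith
    refine ⟨1, 1 / ν, one_pos, by positivity, ?_, ?_, by field_simp⟩
    · funext i; exact i.elim0
    · funext j; exact hn.elim j
  · haveI : Nonempty (Fin m) := ⟨⟨0, hm⟩⟩
    have hn : Nonempty (Fin n) := by
      by_contra hne
      rw [not_nonempty_iff] at hne
      have h1 := congrFun hb2 ⟨0, hm⟩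
      simp [Matrix.mulVec, dotProduct, Matrix.mul_apply] at h1
      have := hb ⟨0, hm⟩
      linarith
    have hc : ∀ i, 0 < W.mulVec a i := fun i =>
      Finset.sum_pos (fun j _ => mul_pos (hW i j) (ha j)) Finset.univ_nonempty
    obtain ⟨i0, hi0⟩ := Finite.exists_min (fun i => W.mulVec a i / b i)
    obtain ⟨t, ht⟩ : ∃ t, t = W.mulVec a i0 / b i0 := ⟨_, rfl⟩
    have htpos : 0 < t := ht ▸ div_pos (hc i0) (hb i0)
    obtain ⟨d, hd⟩ : ∃ d, d = W.mulVec a - t • b := ⟨_, rfl⟩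
    have hd0 : ∀ i, 0 ≤ d i := by
      intro i
      have h := hi0 i
      simp only [← ht] at h
      rw [le_div_iff₀ (hb i)] at h
      simp [hd]; exact h
    have hdi : d i0 = 0 := by
      have := (hb i0).ne'
      simp [hd, ht]; field_simp; simp
    have hdeq : ν • W.mulVec (W'.mulVec d) = d := by
      have h1 : ν • W.mulVec (W'.mulVec (W.mulVec a)) = W.mulVec a := by
        rw [← Matrix.mulVec_smul, ha2]
      rw [hd, Matrix.mulVec_sub, Matrix.mulVec_sub, smul_sub, h1,
        Matrix.mulVec_smul, Matrix.mulVec_smul, smul_comm, hb2]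
    have he0 : ∀ j, 0 ≤ W'.mulVec d j := fun j => by
      simp only [Matrix.mulVec, dotProduct]
      exact Finset.sum_nonneg (fun i _ => mul_nonneg (hW' j i).le (hd0 i))
    have hz : W.mulVec (W'.mulVec d) i0 = 0 := by
      have h := congrFun hdeq i0
      rw [hdi, Pi.smul_apply, smul_eq_mul] at h
      exact (mul_eq_zero.mp h).resolve_left hν.ne'
    have he : W'.mulVec d = 0 := by
      have hz' : ∑ j, W i0 j * W'.mulVec d j = 0 := hz
      have h := (Finset.sum_eq_zero_iff_of_nonneg
        (fun j _ => mul_nonneg (hW i0 j).le (he0 j))).mp hz'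
      funext j
      exact (mul_eq_zero.mp (h j (Finset.mem_univ j))).resolve_left (hW i0 j).ne'
    have hdz : d = 0 := by
      rw [← hdeq, he]; simp
    have hWa : W.mulVec a = t • b := by
      rw [hd] at hdz; exact sub_eq_zero.mp hdz
    refine ⟨t, 1 / (t * ν), htpos, by positivity, hWa, ?_, by field_simp⟩
    rw [hWa, Matrix.mulVec_smul, smul_smul] at ha2
    conv_rhs => rw [← ha2]
    rw [smul_smul]
    have : 1 / (t * ν) * (ν * t) = 1 := by field_simp
    rw [this, one_smul]
end

section
/- Let W be an m×n real matrix with all entries positive and W' an n×m real matrix with all entries positive, and suppose all row sums of the m×m matrix W·W' are equal, i.e., Σ_j (W·W') i j is the same for every i. If (a, b) is a pair with a ∈ ℝ^n and b ∈ ℝ^m having all entries positive, ‖a‖ = ‖b‖ = 1 in the Euclidean norm, and b = λ·(W·a), a = μ·(W'·b) for some λ, μ > 0, then b is the constant vector with every entry equal to 1/√m. -/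
/-- Remark 5.3 of the paper.
Let `W` and `W'` be positive matrices such that all row sums of `W·W'` are equal.
If `(a, b)` is an NEBS for `(W, W')` — all entries positive, Euclidean norms `1`,
`b = λ • (W·a)` and `a = μ • (W'·b)` for some `λ, μ > 0` — then `b` is the constant
vector with every entry `1 / √m`. -/
theorem nebs_constant_of_equal_row_sums (m n : ℕ)
    (W : Matrix (Fin m) (Fin n) ℝ) (W' : Matrix (Fin n) (Fin m) ℝ)
    (hW : ∀ i j, 0 < W i j) (hW' : ∀ i j, 0 < W' i j)
    (hrows : ∀ i i' : Fin m, ∑ j, (W * W') i j = ∑ j, (W * W') i' j)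
    (a : Fin n → ℝ) (b : Fin m → ℝ)
    (ha : ∀ i, 0 < a i) (hb : ∀ i, 0 < b i)
    (hna : ‖(WithLp.equiv 2 (Fin n → ℝ)).symm a‖ = 1)
    (hnb : ‖(WithLp.equiv 2 (Fin m → ℝ)).symm b‖ = 1)
    (l mu : ℝ) (hl : 0 < l) (hmu : 0 < mu)
    (heqb : b = l • W.mulVec a) (heqa : a = mu • W'.mulVec b) :
    b = fun _ => 1 / Real.sqrt m := by
  have hm : Nonempty (Fin m) := by
    by_contra h
    rw [not_nonempty_iff] at h
    rw [EuclideanSpace.norm_eq] at hnb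
    simp at hnb
  have hn : Nonempty (Fin n) := by
    by_contra h
    rw [not_nonempty_iff] at h
    rw [EuclideanSpace.norm_eq] at hna
    simp at hna
  have hA : ∀ i j, 0 < (W * W') i j := fun i j => by
    rw [Matrix.mul_apply]
    exact Finset.sum_pos (fun k _ => mul_pos (hW i k) (hW' k j)) Finset.univ_nonempty
  have hc : 0 < l * mu := mul_pos hl hmu
  have key : ∀ i, b i = (l * mu) * ∑ j, (W * W') i j * b j := by
    intro i
    have h : b = (l * mu) • (W * W').mulVec b := by
      rw [← Matrix.mulVec_mulVec, mul_smul, ← Matrix.mulVec_smul, ← heqa]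
      exact heqb
    have := congrFun h i
    simpa [Matrix.mulVec, dotProduct] using this
  generalize W * W' = A at *
  generalize l * mu = c at *
  obtain ⟨p, hp⟩ := Finite.exists_max b
  obtain ⟨q, hq⟩ := Finite.exists_min b
  have h1 : b p ≤ c * (∑ j, A p j) * b p := by
    conv_lhs => rw [key p]
    rw [mul_assoc, Finset.sum_mul]
    exact mul_le_mul_of_nonneg_left
      (Finset.sum_le_sum fun j _ => mul_le_mul_of_nonneg_left (hp j) (hA p j).le) hc.le
  have h2 : c * (∑ j, A q j) * b q ≤ b q := by
    conv_rhs => rw [key q]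
    rw [mul_assoc, Finset.sum_mul]
    exact mul_le_mul_of_nonneg_left
      (Finset.sum_le_sum fun j _ => mul_le_mul_of_nonneg_left (hq j) (hA q j).le) hc.le
  rw [hrows q p] at h2
  have h3 : c * (∑ j, A p j) = 1 := by
    apply le_antisymm
    · exact le_of_mul_le_mul_right (by linarith) (hb q)
    · exact le_of_mul_le_mul_right (by linarith) (hb p)
  have h4 : ∑ j, A p j * (b p - b j) = 0 := by
    have h5 : c * ∑ j, A p j * (b p - b j) = 0 := by
      simp only [mul_sub, Finset.sum_sub_distrib, ← Finset.sum_mul]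
      rw [← key p, ← mul_assoc, h3]
      ring
    exact (mul_eq_zero.mp h5).resolve_left hc.ne'
  rw [Finset.sum_eq_zero_iff_of_nonneg
    (fun j _ => mul_nonneg (hA p j).le (sub_nonneg.mpr (hp j)))] at h4
  have hconst : ∀ j, b j = b p := fun j => by
    have := (mul_eq_zero.mp (h4 j (Finset.mem_univ j))).resolve_left (hA p j).ne'
    linarith
  have hmp : (0 : ℝ) < m := by
    have := Fin.pos p
    exact_mod_cast this
  rw [EuclideanSpace.norm_eq] at hnb
  have h6 : Real.sqrt (m * b p ^ 2) = 1 := by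
    simpa [hconst] using hnb
  rw [Real.sqrt_mul hmp.le, Real.sqrt_sq (hb p).le] at h6
  funext j
  rw [hconst j, eq_div_iff (Real.sqrt_pos.mpr hmp).ne']
  linarith
end
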